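/- (Generalized Russo lemma.) Let E be a finite set, let f:{0,1}^E→ℝ be monotone increasing with respect to the coordinatewise partial order, and let p∈(0,1). Then the map q ↦ E_q(f) (expectation under the product Bernoulli(q) measure) is differentiable at p and (d/dp) E_p(f) = (1/(2p(1−p))) · Σ_{e∈E} ‖Δ_{e,p} f‖_{1,p}. -/

import Mathlib

open Filter

noncomputable section

/-- The spanning subgraph of `G` determined by the configuration `x : {0,1}^E`:
an edge of `G` is retained iff its coordinate equals `true`. -/
def percoGraph {V : Type*} (G : SimpleGraph V) (x : G.edgeSet → Bool) : SimpleGraph V :=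
  SimpleGraph.fromEdgeSet {e : Sym2 V | ∃ h : e ∈ G.edgeSet, x ⟨e, h⟩ = true}

/-- The vertex set of the connected component of `v` in the configuration `x`. -/
def percoComp {V : Type*} (G : SimpleGraph V) (x : G.edgeSet → Bool) (v : V) : Set V :=
  {u | (percoGraph G x).Reachable v u}

/-- The number of vertices of the connected component of `v` in the configuration `x`. -/
def compSize {V : Type*} (G : SimpleGraph V) (x : G.edgeSet → Bool) (v : V) : ℕ :=
  (percoComp G x v).ncard

/-- `L⁽¹⁾`: the number of vertices of the largest connected component of the configuration. -/
def largestComp {V : Type*} (G : SimpleGraph V) (x : G.edgeSet → Bool) : ℕ :=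
  sSup (Set.range (compSize G x))

/-- The probability of a single configuration under the product Bernoulli(p) measure. -/
def configProb {E : Type*} (p : ℝ) (x : E → Bool) : ℝ :=
  ∏ᶠ e : E, if x e then p else 1 - p

/-- The product Bernoulli(p) probability of a set of configurations. -/
def probC {E : Type*} (p : ℝ) (A : Set (E → Bool)) : ℝ :=
  ∑ᶠ x ∈ A, configProb p x

/-- Expectation under the product Bernoulli(p) measure. -/
def expC {E : Type*} (p : ℝ) (f : (E → Bool) → ℝ) : ℝ :=
  ∑ᶠ x : E → Bool, configProb p x * f x

/-- Variance under the product Bernoulli(p) measure. -/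
def varC {E : Type*} (p : ℝ) (f : (E → Bool) → ℝ) : ℝ :=
  expC p (fun x => f x ^ 2) - (expC p f) ^ 2

open Classical in
/-- The configuration `x` with coordinate `e` set to `b`. -/
def setEdge {E : Type*} (x : E → Bool) (e : E) (b : Bool) : E → Bool :=
  fun e' => if e' = e then b else x e'

/-- The operator `Δ_{e,p} f (x) = f(x) - ∫ f(x) dx(e)`. -/
def deltaE {E : Type*} (p : ℝ) (f : (E → Bool) → ℝ) (e : E) (x : E → Bool) : ℝ :=
  f x - (p * f (setEdge x e true) + (1 - p) * f (setEdge x e false))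

/-- The norm `‖g‖_{1,p}`. -/
def norm1 {E : Type*} (p : ℝ) (g : (E → Bool) → ℝ) : ℝ :=
  expC p fun x => |g x|

/-- The squared norm `‖g‖_{2,p}²`. -/
def sqNorm2 {E : Type*} (p : ℝ) (g : (E → Bool) → ℝ) : ℝ :=
  expC p fun x => g x ^ 2

/-- `|E(S, Sᶜ)|`: the number of edges of `G` with one endpoint in `S` and the other outside `S`
(counted via the ordered pair whose first coordinate lies in `S`). -/
def edgeBoundaryCard {V : Type*} (G : SimpleGraph V) (S : Set V) : ℕ :=
  {q : V × V | G.Adj q.1 q.2 ∧ q.1 ∈ S ∧ q.2 ∉ S}.ncard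

/-- The maximal degree of `G` is at most `d`. -/
def DegreeLE {V : Type*} (G : SimpleGraph V) (d : ℕ) : Prop :=
  ∀ v, {u | G.Adj v u}.ncard ≤ d

/-- The Cheeger (edge-isoperimetric) constant of `G` is strictly greater than `b`. -/
def CheegerGT {V : Type*} (G : SimpleGraph V) (b : ℝ) : Prop :=
  ∀ S : Set V, 0 < S.ncard → 2 * S.ncard ≤ Nat.card V →
    b * (S.ncard : ℝ) < (edgeBoundaryCard G S : ℝ)

/-- A `(b,d)`-expander: a sequence of finite graphs with `|V_n| → ∞`, maximal degree at most `d`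
and Cheeger constant greater than `b`. -/
structure ExpanderSeq (b : ℝ) (d : ℕ) where
  V : ℕ → Type
  finV : ∀ n, Finite (V n)
  G : ∀ n, SimpleGraph (V n)
  card_tendsto : Tendsto (fun n => Nat.card (V n)) atTop atTop
  degree_le : ∀ n, DegreeLE (G n) d
  cheeger_gt : ∀ n, CheegerGT (G n) b

/-!
Fix an edge `e` and write `x⁺`, `x⁻` for the configuration `x` with `x e` replaced by `1`, `0`.
Differentiating the product `configProb q x` removes the factor at `e` and inserts the sign of
`x e`; summing the two values of `x e` against that sign yields the Margulis–Russo formula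
`d/dp E_p f = ∑ₑ E_p [f x⁺ - f x⁻]`, valid for every `f`. On the other hand `Δ_{e,p} f` takes the
value `(1 - p) (f x⁺ - f x⁻)` with probability `p` and `-p (f x⁺ - f x⁻)` with probability `1 - p`,
so that `‖Δ_{e,p} f‖₁ = 2 p (1 - p) E_p |f x⁺ - f x⁻|`, and monotonicity removes the absolute value.
-/

variable {E : Type*}

theorem setEdge_eq_update [DecidableEq E] (x : E → Bool) (e : E) (b : Bool) :
    setEdge x e b = Function.update x e b := by
  funext j
  simp [setEdge, Function.update_apply]

@[simp]
theorem setEdge_self (x : E → Bool) (e : E) (b : Bool) : setEdge x e b e = b := by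
  simp [setEdge]

@[simp]
theorem setEdge_idem (x : E → Bool) (e : E) (b c : Bool) :
    setEdge (setEdge x e b) e c = setEdge x e c := by
  classical simp [setEdge_eq_update]

@[simp]
theorem setEdge_eq_self (x : E → Bool) (e : E) : setEdge x e (x e) = x := by
  classical simp [setEdge_eq_update]

@[simp]
theorem domRestrict_compl_setEdge (x : E → Bool) (e : E) (b : Bool) :
    ({e}ᶜ : Set E).domRestrict (setEdge x e b) = ({e}ᶜ : Set E).domRestrict x := by
  funext ⟨j, hj⟩
  exact if_neg hj

theorem setEdge_mono (x : E → Bool) (e : E) : Monotone (setEdge x e) := by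
  classical
  intro b c hbc
  simpa only [setEdge_eq_update] using Function.update_mono hbc

theorem involutive_setEdge_not (e : E) :
    Function.Involutive fun x : E → Bool => setEdge x e (!x e) := fun x => by
  simp

theorem finsum_setEdge_true_add_false [Finite E] {M : Type*} [AddCommMonoid M]
    (g : (E → Bool) → M) (e : E) :
    ∑ᶠ x, (g (setEdge x e true) + g (setEdge x e false)) = 2 • ∑ᶠ x, g x := by
  have pair (x : E → Bool) :
      g (setEdge x e true) + g (setEdge x e false) = g x + g (setEdge x e (!x e)) := by
    obtain hx | hx := Bool.eq_false_or_eq_true (x e)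
    · rw [hx, Bool.not_true, ← hx, setEdge_eq_self]
    · rw [hx, Bool.not_false, ← hx, setEdge_eq_self, add_comm]
  have flip : ∑ᶠ x, g (setEdge x e (!x e)) = ∑ᶠ x, g x :=
    finsum_comp_equiv (involutive_setEdge_not e).toPerm
  rw [finsum_congr pair, finsum_add_distrib (Set.toFinite _) (Set.toFinite _), flip, two_nsmul]

/-- The discrete derivative `f(x⁺) - f(x⁻)` of `f` at the edge `e`, where `x⁺` and `x⁻` are `x` with
the coordinate `e` set to `1` and to `0`; its expectation is the contribution of `e` to the
derivative of `E_p f` in `p`. -/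
def edgeDiff (f : (E → Bool) → ℝ) (e : E) (x : E → Bool) : ℝ :=
  f (setEdge x e true) - f (setEdge x e false)

theorem edgeDiff_nonneg_of_monotone {f : (E → Bool) → ℝ} (hf : Monotone f) (e : E) (x : E → Bool) :
    0 ≤ edgeDiff f e x :=
  sub_nonneg.2 (hf (setEdge_mono x e (Bool.false_le true)))

theorem deltaE_setEdge_true (p : ℝ) (f : (E → Bool) → ℝ) (e : E) (x : E → Bool) :
    deltaE p f e (setEdge x e true) = (1 - p) * edgeDiff f e x := by
  simp only [deltaE, edgeDiff, setEdge_idem]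
  ring

theorem deltaE_setEdge_false (p : ℝ) (f : (E → Bool) → ℝ) (e : E) (x : E → Bool) :
    deltaE p f e (setEdge x e false) = -(p * edgeDiff f e x) := by
  simp only [deltaE, edgeDiff, setEdge_idem]
  ring

theorem expC_const_mul (p c : ℝ) (f : (E → Bool) → ℝ) :
    expC p (fun x => c * f x) = c * expC p f := by
  simp only [expC, mul_finsum, mul_left_comm]

theorem norm1_edgeDiff_of_monotone (p : ℝ) {f : (E → Bool) → ℝ} (hf : Monotone f) (e : E) :
    norm1 p (edgeDiff f e) = expC p (edgeDiff f e) :=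
  congrArg (expC p) (funext fun x => abs_of_nonneg (edgeDiff_nonneg_of_monotone hf e x))

variable [Finite E]

theorem configProb_eq_mul_domRestrict_compl (p : ℝ) (x : E → Bool) (e : E) :
    configProb p x = (if x e then p else 1 - p) * configProb p (({e}ᶜ : Set E).domRestrict x) := by
  rw [configProb, ← mul_finprod_cond_ne e (Set.toFinite _)]
  exact congrArg _ (finprod_set_coe_eq_finprod_mem {e}ᶜ).symm

theorem configProb_setEdge (p : ℝ) (x : E → Bool) (e : E) (b : Bool) :
    configProb p (setEdge x e b) =
      (if b then p else 1 - p) * configProb p (({e}ᶜ : Set E).domRestrict x) := by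
  rw [configProb_eq_mul_domRestrict_compl p _ e, setEdge_self, domRestrict_compl_setEdge]

theorem configProb_setEdge_true_add_false (p : ℝ) (x : E → Bool) (e : E) :
    configProb p (setEdge x e true) + configProb p (setEdge x e false) =
      configProb p (({e}ᶜ : Set E).domRestrict x) := by
  simp only [configProb_setEdge, if_true, Bool.false_eq_true, if_false]
  ring

theorem finsum_configProb_domRestrict_compl_mul (p : ℝ) (e : E) (g : (E → Bool) → ℝ) :
    ∑ᶠ x, configProb p (({e}ᶜ : Set E).domRestrict x) * g x =
      expC p fun x => g (setEdge x e true) + g (setEdge x e false) := by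
  -- Doubling turns both sums into sums over the pairs `(x⁺, x⁻)`, which agree pair by pair.
  refine nsmul_right_injective two_ne_zero ?_
  simp only [expC, ← finsum_setEdge_true_add_false _ e, domRestrict_compl_setEdge, setEdge_idem,
    ← mul_add, ← add_mul, configProb_setEdge_true_add_false]

theorem expC_eq_expC_setEdge (p : ℝ) (f : (E → Bool) → ℝ) (e : E) :
    expC p f = expC p fun x => p * f (setEdge x e true) + (1 - p) * f (setEdge x e false) := by
  calc
    expC p f = ∑ᶠ x, configProb p (({e}ᶜ : Set E).domRestrict x) *
        ((if x e then p else 1 - p) * f x) :=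
      finsum_congr fun x => by rw [configProb_eq_mul_domRestrict_compl p x e]; ring
    _ = expC p fun x => p * f (setEdge x e true) + (1 - p) * f (setEdge x e false) := by
      simp only [finsum_configProb_domRestrict_compl_mul, setEdge_self, if_true,
        Bool.false_eq_true, if_false]

theorem hasDerivAt_configProb (p : ℝ) (x : E → Bool) :
    HasDerivAt (fun q => configProb q x)
      (∑ᶠ e, configProb p (({e}ᶜ : Set E).domRestrict x) * if x e then 1 else -1) p := by
  classical
  cases nonempty_fintype E
  have weight (e : E) :
      HasDerivAt (fun q : ℝ => if x e then q else 1 - q) (if x e then 1 else -1) p := by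
    split_ifs
    · exact hasDerivAt_id' p
    · exact (hasDerivAt_id' p).const_sub 1
  have erase (e : E) : configProb p (({e}ᶜ : Set E).domRestrict x) =
      ∏ j ∈ Finset.univ.erase e, if x j then p else 1 - p := by
    rw [← finprod_mem_coe_finset, Finset.coe_erase, Finset.coe_univ, ← Set.compl_eq_univ_sdiff]
    exact finprod_set_coe_eq_finprod_mem (f := fun j => if x j then p else 1 - p) {e}ᶜ
  simp only [finsum_eq_sum_of_fintype, erase]
  simpa only [configProb, finprod_eq_prod_of_fintype, smul_eq_mul] using
    HasDerivAt.fun_finsetProd fun e (_ : e ∈ Finset.univ) => weight e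

theorem finsum_configProb_domRestrict_compl_mul_sign (p : ℝ) (f : (E → Bool) → ℝ) (e : E) :
    ∑ᶠ x, (configProb p (({e}ᶜ : Set E).domRestrict x) * if x e then 1 else -1) * f x =
      expC p (edgeDiff f e) := by
  simp only [mul_assoc, finsum_configProb_domRestrict_compl_mul, setEdge_self, if_true,
    Bool.false_eq_true, if_false, one_mul, neg_one_mul, ← sub_eq_add_neg]
  rfl

theorem hasDerivAt_expC (p : ℝ) (f : (E → Bool) → ℝ) :
    HasDerivAt (fun q => expC q f) (∑ᶠ e, expC p (edgeDiff f e)) p := by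
  classical
  cases nonempty_fintype E
  have termwise : HasDerivAt (fun q => expC q f)
      (∑ x, (∑ᶠ e, configProb p (({e}ᶜ : Set E).domRestrict x) * if x e then 1 else -1) * f x)
      p := by
    simp only [expC, finsum_eq_sum_of_fintype (α := E → Bool)]
    exact HasDerivAt.fun_sum fun x _ => (hasDerivAt_configProb p x).mul_const (f x)
  refine termwise.congr_deriv ?_
  simp only [← finsum_configProb_domRestrict_compl_mul_sign, finsum_eq_sum_of_fintype,
    Finset.sum_mul]
  exact Finset.sum_comm

theorem norm1_deltaE {p : ℝ} (hp : p ∈ Set.Icc 0 1) (f : (E → Bool) → ℝ) (e : E) :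
    norm1 p (deltaE p f e) = 2 * p * (1 - p) * norm1 p (edgeDiff f e) := by
  rw [norm1, expC_eq_expC_setEdge p _ e, norm1, ← expC_const_mul]
  congr 1 with x
  rw [deltaE_setEdge_true, deltaE_setEdge_false, abs_neg, abs_mul, abs_mul, abs_of_nonneg hp.1,
    abs_of_nonneg (sub_nonneg.2 hp.2)]
  ring

/-- generalized Russo lemma: for a monotone increasing `f : {0,1}^E → ℝ` and
`p ∈ (0,1)`, the map `q ↦ E_q(f)` is differentiable at `p` with derivative
`(1/(2p(1-p))) Σ_{e ∈ E} ‖Δ_{e,p} f‖_{1,p}`. -/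
theorem stmt11 (E : Type) [Finite E] (f : (E → Bool) → ℝ) (hf : Monotone f)
    (p : ℝ) (hp : p ∈ Set.Ioo (0 : ℝ) 1) :
    HasDerivAt (fun q => expC q f)
      ((1 / (2 * p * (1 - p))) * ∑ᶠ e : E, norm1 p (deltaE p f e)) p := by
  have hp_ne : 2 * p * (1 - p) ≠ 0 := by
    have := hp.1
    have := sub_pos.2 hp.2
    positivity
  have hnorm (e : E) : norm1 p (deltaE p f e) = 2 * p * (1 - p) * expC p (edgeDiff f e) := by
    rw [norm1_deltaE (Set.Ioo_subset_Icc_self hp), norm1_edgeDiff_of_monotone p hf]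
  refine (hasDerivAt_expC p f).congr_deriv ?_
  rw [finsum_congr hnorm, ← mul_finsum, one_div, inv_mul_cancel_left₀ hp_ne]
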